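/- Let a be an object, and u, v, w ∈ Hom(−, a) with w ≤_R u and w ≤_R v in the weak order. If I_L(w) is a proper subset of I_L(u) ∩ I_L(v), then there exists w' ∈ Hom(−, a) with w <_R w', w' ≤_R u and w' ≤_R v. -/

import Mathlib

/-!
Morphisms with a fixed target `a` are handled as words `i₁ ⋯ iₖ`, standing for
`σ_{i₁} ⋯ σ_{iₖ}` with target `a`; `Eqv` is equality of the resulting morphisms.

*Length is the number of inversions.* Prepending a letter changes the number of inversions by
exactly one (`IsFRS.ninv_cons_of_nonpos`, `IsFRS.ninv_cons_of_nonneg`), because `σ_i` permutes the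
positive roots other than `α_i`. In rank two, an alternating word in `i, j` is reduced up to
length `m = |Φ⁺ ∩ (ℕα_i + ℕα_j)|`, and at length `m` it inverts all of these roots. The two
alternating words of length `m` then send `α_i, α_j` to the same negative simple roots, and the
axiom `(ρ_i ρ_j)^m a = a` makes their sources equal, which gives the braid relation
(`IsFRS.braid`). The exchange property (`IsFRS.exchange`) follows by induction: if `i` is a descent
of a reduced word beginning with `j`, letters `j, i, j, …` are pulled to the front until the braid
relation applies. Hence `len` counts inversions (`IsFRS.len_eq`).

*Upper bounds.* If `α_i` and `α_j` are inversions of `u`, the same pulling argument puts the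
longest alternating word below `u` (`IsFRS.LeW_alt`). Induction on the length of `u` then shows
that any two elements below both `u` and `v` have a common upper bound below both
(`IsFRS.exists_upper`). The theorem is the case of `w` and `σ_i`, with
`i ∈ (I_L(u) ∩ I_L(v)) \ I_L(w)`: the bound lies above `σ_i`, so it differs from `w`.
-/

set_option linter.unusedSectionVars false

/-- A Cartan scheme `C = C(I, A, (ρ_i), (C^a))`. -/
structure CartanScheme (I A : Type) [Fintype I] [DecidableEq I] [Fintype A] [Nonempty A] where
  ρ : I → A → A
  c : A → I → I → ℤ
  ρ_invol : ∀ i a, ρ i (ρ i a) = a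
  c_diag : ∀ a i, c a i i = 2
  c_offdiag_nonpos : ∀ a i j, i ≠ j → c a i j ≤ 0
  c_zero_symm : ∀ a i j, c a i j = 0 → c a j i = 0
  c_rho : ∀ a i j, c (ρ i a) i j = c a i j

namespace CartanScheme

variable {I A : Type} [Fintype I] [DecidableEq I] [Fintype A] [Nonempty A] [DecidableEq A]
variable (C : CartanScheme I A)

/-- The simple reflection `σ_i^a` as a map `ℤ^I → ℤ^I`, `σ_i^a(α_j) = α_j - c^a_{ij} α_i`. -/
def sigma (a : A) (i : I) : (I → ℤ) → (I → ℤ) :=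
  fun v k => v k - (if k = i then ∑ j, C.c a i j * v j else 0)

/-- Target object of the word `[i_1, …, i_k]` read at source object `a`:
`ρ_{i_1} ⋯ ρ_{i_k}(a)`. -/
def wordTarget (a : A) : List I → A
  | [] => a
  | i :: l => C.ρ i (wordTarget a l)

/-- The map `σ_{i_1} ⋯ σ_{i_k}^a : ℤ^I → ℤ^I` determined by a word with source `a`. -/
def wordMap (a : A) : List I → ((I → ℤ) → (I → ℤ))
  | [] => id
  | i :: l => C.sigma (C.wordTarget a l) i ∘ wordMap a l

theorem wordTarget_append (a : A) (l₁ l₂ : List I) :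
    C.wordTarget a (l₁ ++ l₂) = C.wordTarget (C.wordTarget a l₂) l₁ := by
  induction l₁ with
  | nil => rfl
  | cons i l ih => simp [wordTarget, ih]

theorem wordMap_append (a : A) (l₁ l₂ : List I) :
    C.wordMap a (l₁ ++ l₂) = C.wordMap (C.wordTarget a l₂) l₁ ∘ C.wordMap a l₂ := by
  induction l₁ with
  | nil => rfl
  | cons i l ih => simp [wordMap, ih, wordTarget_append, Function.comp_assoc]

/-- A morphism of the Weyl groupoid `W(C)`: a source object, a target object, and a map
`ℤ^I → ℤ^I` which is a composition of simple reflections along some word. -/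
@[ext]
structure Mor where
  src : A
  tgt : A
  toFun : (I → ℤ) → (I → ℤ)
  spec : ∃ l : List I, C.wordTarget src l = tgt ∧ C.wordMap src l = toFun

variable {C}

/-- A word realizes a morphism. -/
def Realizes (w : Mor C) (l : List I) : Prop :=
  C.wordTarget w.src l = w.tgt ∧ C.wordMap w.src l = w.toFun

variable (C)

/-- The identity morphism `id^a`. -/
def idMor (a : A) : Mor C := ⟨a, a, id, ⟨[], rfl, rfl⟩⟩

/-- The generator `σ_i^a ∈ Hom(a, ρ_i(a))`. -/
def genMor (i : I) (a : A) : Mor C :=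
  ⟨a, C.ρ i a, C.sigma a i, ⟨[i], rfl, Function.comp_id _⟩⟩

/-- The simple reflection with target `a`, i.e. `id^a σ_i = σ_i^{ρ_i(a)} ∈ Hom(ρ_i(a), a)`. -/
def sgen (a : A) (i : I) : Mor C :=
  { src := C.ρ i a, tgt := a, toFun := C.sigma (C.ρ i a) i,
    spec := ⟨[i], by simp [wordTarget, C.ρ_invol], Function.comp_id _⟩ }

variable {C}

/-- Composition `u ∘ v` (with `v` applied first); junk value `u` if not composable. -/
def Mor.comp (u v : Mor C) : Mor C :=
  if h : v.tgt = u.src then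
    { src := v.src, tgt := u.tgt, toFun := u.toFun ∘ v.toFun,
      spec := by
        obtain ⟨lu, hu1, hu2⟩ := u.spec
        obtain ⟨lv, hv1, hv2⟩ := v.spec
        refine ⟨lu ++ lv, ?_, ?_⟩
        · rw [C.wordTarget_append, hv1, h, hu1]
        · rw [C.wordMap_append, hv1, h, hu2, hv2] }
  else u

/-- Length of a morphism: minimal length of a realizing word. -/
noncomputable def len (w : Mor C) : ℕ := sInf {k | ∃ l : List I, Realizes w l ∧ l.length = k}

/-- A reduced decomposition. -/
def IsReduced (w : Mor C) (l : List I) : Prop := Realizes w l ∧ l.length = len w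

/-- The (right) weak order: `u ≤_R uv` iff `ℓ(uv) = ℓ(u) + ℓ(v)`. -/
def weakLe (u w : Mor C) : Prop :=
  ∃ v : Mor C, v.tgt = u.src ∧ w = u.comp v ∧ len w = len u + len v

/-- Membership in the parabolic subgroupoid `W_J(C)`. -/
def InParabolic (J : Set I) (w : Mor C) : Prop :=
  ∃ l : List I, (∀ i ∈ l, i ∈ J) ∧ Realizes w l

/-- Length with respect to the generators `σ_j`, `j ∈ J`. -/
noncomputable def lenPar (J : Set I) (w : Mor C) : ℕ :=
  sInf {k | ∃ l : List I, (∀ i ∈ l, i ∈ J) ∧ Realizes w l ∧ l.length = k}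

/-- The set of letters occurring in some reduced decomposition of `w`;
by the theorem on reduced decompositions this is the set `J(w)`. -/
def Jset (w : Mor C) : Set I := {i | ∃ l : List I, IsReduced w l ∧ i ∈ l}

variable (C)

/-- The set of real roots at the object `a`. -/
def roots (a : A) : Set (I → ℤ) :=
  {α | ∃ (b : A) (l : List I) (j : I),
    C.wordTarget b l = a ∧ α = C.wordMap b l (Pi.single j 1)}

/-- The set of positive (real) roots at `a`. -/
def posRoots (a : A) : Set (I → ℤ) := {α ∈ C.roots a | ∀ i, 0 ≤ α i}

/-- `R^re(C)` is a finite root system of type `C`: axioms (R1), (R2), (R4) and finiteness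
((R3) holds automatically for real roots). -/
def IsFRS : Prop :=
  (∀ a : A, (C.roots a).Finite) ∧
  (∀ (a : A) (α : I → ℤ), α ∈ C.roots a → (∀ i, 0 ≤ α i) ∨ (∀ i, α i ≤ 0)) ∧
  (∀ (a : A) (i : I) (α : I → ℤ), α ∈ C.roots a → (∃ z : ℤ, α = z • Pi.single i 1) →
    α = Pi.single i 1 ∨ α = -Pi.single i 1) ∧
  (∀ (a : A) (i j : I), i ≠ j →
    (fun x => C.ρ i (C.ρ j x))^[(C.roots a ∩
      {α | ∃ m n : ℕ, α = (m : ℤ) • Pi.single i 1 + (n : ℤ) • Pi.single j 1}).ncard] a = a)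

variable {C}

/-- `I_L(w)`: the set of simple reflections with target `w.tgt` below `w` in weak order. -/
def IL (w : Mor C) : Set I := {i | weakLe (sgen C w.tgt i) w}

/-- `m` is the longest element of `Hom(-,a) ∩ W_J(C)`, i.e. `w_J` at the object `a`. -/
def IsLongestPar (a : A) (J : Set I) (m : Mor C) : Prop :=
  m.tgt = a ∧ InParabolic J m ∧
    ∀ x : Mor C, x.tgt = a → InParabolic J x → weakLe x m

/-- `m` is the longest element `w_I` of `Hom(-,a)`. -/
def IsLongestAt (a : A) (m : Mor C) : Prop :=
  m.tgt = a ∧ ∀ x : Mor C, x.tgt = a → weakLe x m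

/-- `z` is the meet of `x` and `y` in `(Hom(-,a), ≤_R)`. -/
def IsMeet (a : A) (x y z : Mor C) : Prop :=
  z.tgt = a ∧ weakLe z x ∧ weakLe z y ∧
    ∀ t : Mor C, t.tgt = a → weakLe t x → weakLe t y → weakLe t z

/-- `z` is the join of `x` and `y` in `(Hom(-,a), ≤_R)`. -/
def IsJoin (a : A) (x y z : Mor C) : Prop :=
  z.tgt = a ∧ weakLe x z ∧ weakLe y z ∧
    ∀ t : Mor C, t.tgt = a → weakLe x t → weakLe y t → weakLe z t

/-- The left coset `u W_J(C) ⊆ Hom(-, u.tgt)`. -/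
def leftCoset (u : Mor C) (J : Set I) : Set (Mor C) :=
  {x | ∃ v : Mor C, InParabolic J v ∧ v.tgt = u.src ∧ x = u.comp v}

end CartanScheme

variable {I A : Type} [Fintype I] [DecidableEq I] [Fintype A] [Nonempty A] [DecidableEq A]

open CartanScheme



namespace CartanScheme

/-- The simple reflection `σ_i^a` as a `ℤ`-linear map. -/
def sigL (C : CartanScheme I A) (a : A) (i : I) : (I → ℤ) →ₗ[ℤ] (I → ℤ) where
  toFun := C.sigma a i
  map_add' x y := by
    funext k
    simp only [sigma, Pi.add_apply, mul_add, Finset.sum_add_distrib]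
    split_ifs <;> ring
  map_smul' t x := by
    funext k
    simp only [sigma, Pi.smul_apply, smul_eq_mul, RingHom.id_apply]
    split_ifs
    · rw [mul_sub, Finset.mul_sum]
      congr 1
      exact Finset.sum_congr rfl fun j _ => by ring
    · ring

/-- The object reached from `a` by reading the word from left to right. It is the source of the
morphism with target `a` realized by the word. -/
def walk (C : CartanScheme I A) (a : A) : List I → A
  | [] => a
  | i :: l => walk C (C.ρ i a) l

/-- The inverse `σ_{i_k} ⋯ σ_{i_1}^a` of the morphism `σ_{i_1} ⋯ σ_{i_k}` with target `a`. -/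
def gmap (C : CartanScheme I A) (a : A) : List I → ((I → ℤ) →ₗ[ℤ] (I → ℤ))
  | [] => LinearMap.id
  | i :: l => gmap C (C.ρ i a) l ∘ₗ sigL C a i

/-- Two words represent the same morphism with target `a`. -/
def Eqv (C : CartanScheme I A) (a : A) (l l' : List I) : Prop :=
  C.walk a l = C.walk a l' ∧ C.gmap a l = C.gmap a l'

/-- The inversion set, at the target `a`, of the morphism given by the word `l`. -/
def Inv (C : CartanScheme I A) (a : A) (l : List I) : Set (I → ℤ) :=
  {β | β ∈ C.roots a ∧ 0 ≤ β ∧ C.gmap a l β ≤ 0}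

/-- The number of inversions of the morphism with target `a` given by the word `l`. -/
noncomputable def ninv (C : CartanScheme I A) (a : A) (l : List I) : ℕ := (C.Inv a l).ncard

/-- The positive roots at `a` in the span of `α_i` and `α_j`. -/
def Phi (C : CartanScheme I A) (a : A) (i j : I) : Set (I → ℤ) :=
  C.roots a ∩ {α | ∃ m n : ℕ, α = (m : ℤ) • Pi.single i 1 + (n : ℤ) • Pi.single j 1}

/-- The number of positive roots at `a` in the span of `α_i` and `α_j`. -/
noncomputable def mm (C : CartanScheme I A) (a : A) (i j : I) : ℕ := (C.Phi a i j).ncard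

/-- The alternating word `i j i ⋯` with `k` letters. -/
def alt : ℕ → I → I → List I
  | 0, _, _ => []
  | k + 1, i, j => i :: alt k j i

/-- The letter following the alternating word `alt k i j`. -/
def nxt : ℕ → I → I → I
  | 0, i, _ => i
  | k + 1, i, j => nxt k j i

variable {C : CartanScheme I A}

/-! ### Words and the maps they define -/

theorem sigL_apply (a : A) (i : I) (x : I → ℤ) : C.sigL a i x = C.sigma a i x := rfl

theorem sigL_of_ne (a : A) {i k : I} (h : k ≠ i) (x : I → ℤ) : C.sigL a i x k = x k := by
  simp [sigL_apply, sigma, h]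

theorem sigL_single (a : A) (i : I) : C.sigL a i (Pi.single i 1) = -Pi.single i 1 := by
  funext k
  by_cases h : k = i
  · subst h
    simp [sigL_apply, sigma, Pi.single_apply, C.c_diag]
  · simp [sigL_apply, sigma, h]

theorem sigL_sigL (a : A) (i : I) (x : I → ℤ) : C.sigL (C.ρ i a) i (C.sigL a i x) = x := by
  have h1 : ∀ k, C.sigL a i x k = x k - (if k = i then ∑ j, C.c a i j * x j else 0) :=
    fun k => rfl
  funext k
  by_cases h : k = i
  · subst h
    have h2 : C.sigL (C.ρ k a) k (C.sigL a k x) k =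
      C.sigL a k x k - ∑ j, C.c a k j * C.sigL a k x j := by
      simp [sigL_apply, sigma, C.c_rho]
    rw [h2]
    simp only [h1, mul_sub, Finset.sum_sub_distrib]
    simp [C.c_diag]
    ring
  · rw [sigL_of_ne _ h, sigL_of_ne _ h]

theorem walk_append (a : A) (l r : List I) :
    C.walk a (l ++ r) = C.walk (C.walk a l) r := by
  induction l generalizing a with
  | nil => rfl
  | cons i l ih => exact ih _

theorem gmap_append (a : A) (l r : List I) (x : I → ℤ) :
    C.gmap a (l ++ r) x = C.gmap (C.walk a l) r (C.gmap a l x) := by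
  induction l generalizing a x with
  | nil => rfl
  | cons i l ih => exact ih _ _

theorem gmap_cons (a : A) (i : I) (l : List I) (x : I → ℤ) :
    C.gmap a (i :: l) x = C.gmap (C.ρ i a) l (C.sigL a i x) := rfl

theorem walk_reverse (a : A) (l : List I) : C.walk (C.walk a l) l.reverse = a := by
  induction l generalizing a with
  | nil => rfl
  | cons i l ih =>
    rw [List.reverse_cons, walk_append]
    change C.walk (C.walk (C.walk (C.ρ i a) l) l.reverse) [i] = a
    rw [ih]
    exact C.ρ_invol i a

theorem gmap_reverse (a : A) (l : List I) (x : I → ℤ) :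
    C.gmap (C.walk a l) l.reverse (C.gmap a l x) = x := by
  induction l generalizing a x with
  | nil => rfl
  | cons i l ih =>
    rw [List.reverse_cons, gmap_append]
    change C.gmap (C.walk (C.walk (C.ρ i a) l) l.reverse) [i]
      (C.gmap (C.walk (C.ρ i a) l) l.reverse (C.gmap (C.ρ i a) l (C.sigL a i x))) = x
    rw [ih, walk_reverse]
    exact sigL_sigL a i x

theorem gmap_reverse' (a : A) (l : List I) (x : I → ℤ) :
    C.gmap a l (C.gmap (C.walk a l) l.reverse x) = x := by
  have h := gmap_reverse (C := C) (C.walk a l) l.reverse x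
  rwa [walk_reverse, List.reverse_reverse] at h

theorem gmap_injective (a : A) (l : List I) : Function.Injective (C.gmap a l) :=
  Function.LeftInverse.injective (gmap_reverse a l)

theorem wordTarget_eq_walk (b : A) (l : List I) : C.wordTarget b l = C.walk b l.reverse := by
  induction l with
  | nil => rfl
  | cons i l ih => rw [List.reverse_cons, walk_append, ← ih]; rfl

theorem wordMap_eq_gmap (b : A) (l : List I) : C.wordMap b l = C.gmap b l.reverse := by
  induction l with
  | nil => rfl
  | cons i l ih =>
    funext x
    rw [List.reverse_cons, gmap_append, ← ih, ← wordTarget_eq_walk]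
    rfl

theorem wordTarget_walk (a : A) (l : List I) : C.wordTarget (C.walk a l) l = a := by
  rw [wordTarget_eq_walk, walk_reverse]

theorem walk_wordTarget (b : A) (l : List I) : C.walk (C.wordTarget b l) l = b := by
  have h := walk_reverse (C := C) b l.reverse
  rwa [List.reverse_reverse, ← wordTarget_eq_walk] at h

theorem Eqv.refl (a : A) (l : List I) : C.Eqv a l l := ⟨rfl, rfl⟩

theorem Eqv.symm {a : A} {l l' : List I} (h : C.Eqv a l l') : C.Eqv a l' l :=
  ⟨h.1.symm, h.2.symm⟩

theorem Eqv.trans {a : A} {l l' l'' : List I} (h : C.Eqv a l l') (h' : C.Eqv a l' l'') :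
    C.Eqv a l l'' := ⟨h.1.trans h'.1, h.2.trans h'.2⟩

theorem Eqv.append_right {a : A} {l l' : List I} (h : C.Eqv a l l') (r : List I) :
    C.Eqv a (l ++ r) (l' ++ r) := by
  refine ⟨by rw [walk_append, walk_append, h.1], ?_⟩
  refine LinearMap.ext fun x => ?_
  rw [gmap_append, gmap_append, h.1, h.2]

theorem Eqv.append_left {a : A} (l : List I) {r r' : List I} (h : C.Eqv (C.walk a l) r r') :
    C.Eqv a (l ++ r) (l ++ r') := by
  refine ⟨by rw [walk_append, walk_append, h.1], LinearMap.ext fun x => ?_⟩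
  rw [gmap_append, gmap_append, h.2]

theorem Eqv.cons {a : A} (i : I) {r r' : List I} (h : C.Eqv (C.ρ i a) r r') :
    C.Eqv a (i :: r) (i :: r') := Eqv.append_left (a := a) [i] h

theorem eqv_cancel (a : A) (i : I) (l : List I) : C.Eqv a (i :: i :: l) l := by
  constructor
  · change C.walk (C.ρ i (C.ρ i a)) l = _
    rw [C.ρ_invol]
  · refine LinearMap.ext fun x => ?_
    rw [gmap_cons, gmap_cons, sigL_sigL, C.ρ_invol]

theorem Eqv.ninv_eq {a : A} {l l' : List I} (h : C.Eqv a l l') : C.ninv a l = C.ninv a l' := by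
  unfold ninv Inv
  rw [h.2]

/-! ### Real roots and inversions -/

theorem single_mem_roots (a : A) (i : I) : Pi.single i 1 ∈ C.roots a :=
  ⟨a, [], i, rfl, rfl⟩

theorem single_nonneg (i : I) : (0 : I → ℤ) ≤ Pi.single i 1 :=
  Pi.single_nonneg.2 zero_le_one

theorem sigL_mem_roots {a : A} (i : I) {β : I → ℤ} (h : β ∈ C.roots a) :
    C.sigL a i β ∈ C.roots (C.ρ i a) := by
  obtain ⟨b, l, j, hb, rfl⟩ := h
  refine ⟨b, i :: l, j, by rw [← hb]; rfl, ?_⟩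
  subst hb
  rfl

theorem gmap_mem_roots {a : A} (l : List I) {β : I → ℤ} (h : β ∈ C.roots a) :
    C.gmap a l β ∈ C.roots (C.walk a l) := by
  induction l generalizing a β with
  | nil => exact h
  | cons i l ih => exact ih (sigL_mem_roots i h)

theorem root_ne_zero {a : A} {β : I → ℤ} (h : β ∈ C.roots a) : β ≠ 0 := by
  obtain ⟨b, l, j, hb, rfl⟩ := h
  rw [wordMap_eq_gmap]
  intro h0
  have := gmap_injective (C := C) b l.reverse (h0.trans (map_zero _).symm)
  simpa using congrFun this j

theorem IsFRS.sign (hC : C.IsFRS) {a : A} {β : I → ℤ} (h : β ∈ C.roots a) : 0 ≤ β ∨ β ≤ 0 :=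
  hC.2.1 a β h

theorem IsFRS.nonneg (hC : C.IsFRS) {a : A} {β : I → ℤ} (h : β ∈ C.roots a) {k : I}
    (hk : 0 < β k) : 0 ≤ β :=
  (hC.sign h).resolve_right fun h' => absurd (h' k) (not_le.2 hk)

theorem not_nonneg_of_nonpos {a : A} {β : I → ℤ} (h : β ∈ C.roots a) (h1 : β ≤ 0) :
    ¬ 0 ≤ β := fun h2 => root_ne_zero h (le_antisymm h1 h2)

theorem IsFRS.eq_single (hC : C.IsFRS) {a : A} {i : I} {β : I → ℤ} (h : β ∈ C.roots a)
    (h0 : ∀ k, k ≠ i → β k = 0) : β = Pi.single i 1 ∨ β = -Pi.single i 1 := by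
  refine hC.2.2.1 a i β h ⟨β i, ?_⟩
  funext k
  by_cases hk : k = i
  · subst hk; simp
  · simp [hk, h0 k hk]

/-- `σ_i` permutes the positive roots other than `α_i`. -/
theorem IsFRS.sigL_nonneg (hC : C.IsFRS) {a : A} {i : I} {β : I → ℤ} (h : β ∈ C.roots a)
    (h0 : 0 ≤ β) (hne : β ≠ Pi.single i 1) :
    0 ≤ C.sigL a i β ∧ C.sigL a i β ≠ Pi.single i 1 := by
  have : ∃ k, k ≠ i ∧ β k ≠ 0 := by
    by_contra! hcon
    rcases hC.eq_single h hcon with h1 | h1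
    · exact hne h1
    · have := h0 i
      simp [h1] at this
  obtain ⟨k, hk, hβ⟩ := this
  have h2 : 0 < C.sigL a i β k := by
    rw [sigL_of_ne _ hk]
    exact lt_of_le_of_ne (h0 k) (Ne.symm hβ)
  refine ⟨hC.nonneg (sigL_mem_roots i h) h2, fun h3 => ?_⟩
  rw [h3] at h2
  simp [hk] at h2

theorem IsFRS.finite_Inv (hC : C.IsFRS) (a : A) (l : List I) : (C.Inv a l).Finite :=
  (hC.1 a).subset fun _ h => h.1

theorem IsFRS.finite_Phi (hC : C.IsFRS) (a : A) (i j : I) : (C.Phi a i j).Finite :=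
  (hC.1 a).subset fun _ h => h.1

theorem IsFRS.ncard_Inv_aux (hC : C.IsFRS) (a : A) (i : I) (l : List I) :
    (C.Inv a (i :: l) \ {Pi.single i 1}).ncard ≤
      (C.Inv (C.ρ i a) l \ {Pi.single i 1}).ncard := by
  refine Set.ncard_le_ncard_of_injOn (C.sigL a i) ?_ ?_ ((hC.finite_Inv _ _).subset
    Set.sdiff_subset)
  · rintro β ⟨⟨h1, h2, h3⟩, h4⟩
    obtain ⟨h5, h6⟩ := hC.sigL_nonneg h1 h2 h4
    exact ⟨⟨sigL_mem_roots i h1, h5, h3⟩, h6⟩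
  · exact (gmap_injective (C := C) a [i]).injOn

theorem IsFRS.ncard_Inv (hC : C.IsFRS) (a : A) (i : I) (l : List I) :
    (C.Inv a (i :: l) \ {Pi.single i 1}).ncard =
      (C.Inv (C.ρ i a) l \ {Pi.single i 1}).ncard := by
  refine le_antisymm (hC.ncard_Inv_aux a i l) ?_
  have h := hC.ncard_Inv_aux (C.ρ i a) i (i :: l)
  rw [C.ρ_invol] at h
  have h2 : C.Inv (C.ρ i a) (i :: i :: l) = C.Inv (C.ρ i a) l := by
    unfold Inv
    rw [(eqv_cancel (C.ρ i a) i l).2]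
  rwa [h2] at h

theorem gmap_cons_single (a : A) (i : I) (l : List I) :
    C.gmap a (i :: l) (Pi.single i 1) = - C.gmap (C.ρ i a) l (Pi.single i 1) := by
  rw [gmap_cons, sigL_single, map_neg]

theorem single_mem_Inv {a : A} {i : I} {l : List I} :
    Pi.single i 1 ∈ C.Inv a l ↔ C.gmap a l (Pi.single i 1) ≤ 0 :=
  ⟨fun h => h.2.2, fun h => ⟨single_mem_roots a i, single_nonneg i, h⟩⟩

theorem IsFRS.ninv_cons_of_nonpos (hC : C.IsFRS) {a : A} {i : I} {l : List I}
    (h : C.gmap a (i :: l) (Pi.single i 1) ≤ 0) :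
    C.ninv a (i :: l) = C.ninv (C.ρ i a) l + 1 := by
  have h1 : Pi.single i 1 ∉ C.Inv (C.ρ i a) l := by
    rw [single_mem_Inv]
    intro h2
    rw [gmap_cons_single] at h
    exact not_nonneg_of_nonpos (gmap_mem_roots l (single_mem_roots _ i)) h2 (neg_nonpos.1 h)
  have h2 := hC.ncard_Inv a i l
  rw [Set.sdiff_singleton_eq_self h1] at h2
  unfold ninv
  rw [← h2, Set.ncard_sdiff_singleton_add_one (single_mem_Inv.2 h) (hC.finite_Inv _ _)]

theorem IsFRS.ninv_cons_of_nonneg (hC : C.IsFRS) {a : A} {i : I} {l : List I}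
    (h : 0 ≤ C.gmap a (i :: l) (Pi.single i 1)) :
    C.ninv a (i :: l) + 1 = C.ninv (C.ρ i a) l := by
  have h1 : C.gmap (C.ρ i a) (i :: i :: l) (Pi.single i 1) ≤ 0 := by
    rw [gmap_cons_single, C.ρ_invol]
    exact neg_nonpos.2 h
  have h2 := hC.ninv_cons_of_nonpos h1
  rw [C.ρ_invol, (eqv_cancel (C.ρ i a) i l).ninv_eq] at h2
  exact h2.symm

theorem ninv_nil (a : A) : C.ninv a [] = 0 := by
  have h : C.Inv a [] = ∅ := by
    refine Set.eq_empty_iff_forall_notMem.2 ?_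
    rintro β ⟨h1, h2, h3⟩
    exact not_nonneg_of_nonpos h1 h3 h2
  rw [ninv, h, Set.ncard_empty]

theorem IsFRS.ninv_cons_le (hC : C.IsFRS) (a : A) (i : I) (l : List I) :
    C.ninv a (i :: l) ≤ C.ninv (C.ρ i a) l + 1 := by
  rcases hC.sign (gmap_mem_roots (i :: l) (single_mem_roots a i)) with h | h
  · have := hC.ninv_cons_of_nonneg h
    omega
  · exact (hC.ninv_cons_of_nonpos h).le

theorem IsFRS.ninv_le_length (hC : C.IsFRS) (a : A) (l : List I) : C.ninv a l ≤ l.length := by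
  induction l generalizing a with
  | nil => exact (ninv_nil a).le
  | cons i l ih =>
    have := hC.ninv_cons_le a i l
    have := ih (C.ρ i a)
    simp only [List.length_cons]
    omega

theorem IsFRS.reduced_tail (hC : C.IsFRS) {a : A} {i : I} {l : List I}
    (h : C.ninv a (i :: l) = (i :: l).length) :
    C.ninv (C.ρ i a) l = l.length ∧ C.gmap a (i :: l) (Pi.single i 1) ≤ 0 := by
  have h1 := hC.ninv_le_length (C.ρ i a) l
  have h2 := hC.ninv_cons_le a i l
  simp only [List.length_cons] at h
  refine ⟨by omega, ?_⟩
  rcases hC.sign (gmap_mem_roots (i :: l) (single_mem_roots a i)) with h3 | h3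
  · have := hC.ninv_cons_of_nonneg h3
    omega
  · exact h3

theorem IsFRS.reduced_suffix (hC : C.IsFRS) {a : A} (l : List I) {r : List I}
    (h : C.ninv a (l ++ r) = (l ++ r).length) :
    C.ninv (C.walk a l) r = r.length := by
  induction l generalizing a with
  | nil => exact h
  | cons i l ih => exact ih (hC.reduced_tail h).1

theorem IsFRS.ninv_descent (hC : C.IsFRS) {a : A} {l : List I} {i : I}
    (h : C.gmap a l (Pi.single i 1) ≤ 0) : C.ninv (C.ρ i a) (i :: l) + 1 = C.ninv a l := by
  have h1 : 0 ≤ C.gmap (C.ρ i a) (i :: l) (Pi.single i 1) := by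
    rw [gmap_cons_single, C.ρ_invol]
    exact neg_nonneg.2 h
  have h2 := hC.ninv_cons_of_nonneg h1
  rwa [C.ρ_invol] at h2

/-! ### Alternating words and rank two -/

theorem alt_succ' (k : ℕ) (i j : I) : alt (k + 1) i j = alt k i j ++ [nxt k i j] := by
  induction k generalizing i j with
  | zero => rfl
  | succ k ih =>
    change i :: alt (k + 1) j i = i :: (alt k j i ++ [nxt k j i])
    rw [ih]

theorem alt_reverse (k : ℕ) (i j : I) :
    (alt k i j).reverse = alt k (nxt k j i) (nxt k i j) := by
  induction k with
  | zero => rfl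
  | succ k ih =>
    rw [alt_succ', List.reverse_append, ih]
    rfl

theorem alt_add (k l : ℕ) (i j : I) :
    alt (k + l) i j = alt k i j ++ alt l (nxt k i j) (nxt k j i) := by
  induction k generalizing i j with
  | zero => rw [Nat.zero_add]; rfl
  | succ k ih =>
    rw [Nat.succ_add]
    change i :: alt (k + l) j i = i :: (alt k j i ++ alt l (nxt k j i) (nxt k i j))
    rw [ih]

theorem nxt_cases (k : ℕ) (i j : I) :
    (nxt k i j = i ∧ nxt k j i = j) ∨ (nxt k i j = j ∧ nxt k j i = i) := by
  induction k generalizing i j with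
  | zero => exact Or.inl ⟨rfl, rfl⟩
  | succ k ih => exact (ih j i).symm

theorem nxt_ne (k : ℕ) {i j : I} (h : i ≠ j) : nxt k i j ≠ nxt k j i := by
  rcases nxt_cases k i j with ⟨h1, h2⟩ | ⟨h1, h2⟩ <;> rw [h1, h2]
  exacts [h, h.symm]

theorem length_alt (k : ℕ) (i j : I) : (alt k i j).length = k := by
  induction k generalizing i j with
  | zero => rfl
  | succ k ih => simp [alt, ih]

theorem gmap_alt_of_ne (a : A) (k : ℕ) {i j t : I} (hi : t ≠ i) (hj : t ≠ j) (x : I → ℤ) :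
    C.gmap a (alt k i j) x t = x t := by
  induction k generalizing a i j x with
  | zero => rfl
  | succ k ih =>
    change C.gmap (C.ρ i a) (alt k j i) (C.sigL a i x) t = _
    rw [ih _ hj hi, sigL_of_ne _ hi]

theorem mem_Phi {a : A} {i j : I} (hij : i ≠ j) {β : I → ℤ} :
    β ∈ C.Phi a i j ↔ β ∈ C.roots a ∧ 0 ≤ β ∧ ∀ k, k ≠ i → k ≠ j → β k = 0 := by
  constructor
  · rintro ⟨h1, m, n, rfl⟩
    refine ⟨h1, ?_, fun k hi hj => by simp [hi, hj]⟩
    exact add_nonneg (smul_nonneg (by positivity) (single_nonneg i))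
      (smul_nonneg (by positivity) (single_nonneg j))
  · rintro ⟨h1, h2, h3⟩
    refine ⟨h1, (β i).toNat, (β j).toNat, ?_⟩
    rw [Int.toNat_of_nonneg (h2 i), Int.toNat_of_nonneg (h2 j)]
    funext k
    by_cases hi : k = i
    · subst hi; simp [hij]
    · by_cases hj : k = j
      · subst hj; simp [hij]
      · simp [hi, hj, h3 k hi hj]

theorem Phi_symm (a : A) {i j : I} (hij : i ≠ j) : C.Phi a i j = C.Phi a j i := by
  ext β
  rw [mem_Phi hij, mem_Phi hij.symm]
  exact ⟨fun h => ⟨h.1, h.2.1, fun k h1 h2 => h.2.2 k h2 h1⟩,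
    fun h => ⟨h.1, h.2.1, fun k h1 h2 => h.2.2 k h2 h1⟩⟩

theorem mm_symm (a : A) {i j : I} (hij : i ≠ j) : C.mm a i j = C.mm a j i := by
  rw [mm, mm, Phi_symm a hij]

theorem single_mem_Phi (a : A) {i j : I} (hij : i ≠ j) : Pi.single i 1 ∈ C.Phi a i j :=
  (mem_Phi hij).2 ⟨single_mem_roots a i, single_nonneg i, fun k h _ => by simp [h]⟩

theorem IsFRS.two_le_mm (hC : C.IsFRS) (a : A) {i j : I} (hij : i ≠ j) : 2 ≤ C.mm a i j := by
  have h1 : Pi.single j 1 ∈ C.Phi a i j := by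
    rw [Phi_symm a hij]
    exact single_mem_Phi a hij.symm
  have h2 : (Pi.single i 1 : I → ℤ) ≠ Pi.single j 1 := fun h => by
    have := congrFun h i
    simp [hij] at this
  rw [← Set.ncard_pair h2]
  exact Set.ncard_le_ncard (Set.insert_subset (single_mem_Phi a hij)
    (Set.singleton_subset_iff.2 h1)) (hC.finite_Phi a i j)

theorem IsFRS.mm_rho_le (hC : C.IsFRS) (a : A) {i j : I} (hij : i ≠ j) :
    C.mm a i j ≤ C.mm (C.ρ i a) i j := by
  have h : (C.Phi a i j \ {Pi.single i 1}).ncard ≤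
      (C.Phi (C.ρ i a) i j \ {Pi.single i 1}).ncard := by
    refine Set.ncard_le_ncard_of_injOn (C.sigL a i) ?_ ?_
      ((hC.finite_Phi _ i j).subset Set.sdiff_subset)
    · rintro β ⟨h1, h4⟩
      obtain ⟨h1, h2, h3⟩ := (mem_Phi hij).1 h1
      obtain ⟨h5, h6⟩ := hC.sigL_nonneg h1 h2 h4
      refine ⟨(mem_Phi hij).2 ⟨sigL_mem_roots i h1, h5, fun k hi hj => ?_⟩, h6⟩
      rw [sigL_of_ne _ hi, h3 k hi hj]
    · exact (gmap_injective (C := C) a [i]).injOn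
  have h1 := Set.ncard_sdiff_singleton_add_one (single_mem_Phi (C := C) a hij)
    (hC.finite_Phi a i j)
  have h2 := Set.ncard_sdiff_singleton_add_one (single_mem_Phi (C := C) (C.ρ i a) hij)
    (hC.finite_Phi (C.ρ i a) i j)
  unfold mm
  omega

theorem IsFRS.mm_rho (hC : C.IsFRS) (a : A) {i j : I} (hij : i ≠ j) :
    C.mm (C.ρ i a) i j = C.mm a i j := by
  refine le_antisymm ?_ (hC.mm_rho_le a hij)
  have h := hC.mm_rho_le (C.ρ i a) hij
  rwa [C.ρ_invol] at h

theorem IsFRS.mm_walk (hC : C.IsFRS) (a : A) (k : ℕ) {i j : I} (hij : i ≠ j) :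
    C.mm (C.walk a (alt k i j)) i j = C.mm a i j := by
  induction k generalizing a i j with
  | zero => rfl
  | succ k ih =>
    change C.mm (C.walk (C.ρ i a) (alt k j i)) i j = _
    rw [mm_symm _ hij, ih _ hij.symm, mm_symm _ hij.symm, hC.mm_rho a hij]

theorem IsFRS.mm_walk_nxt (hC : C.IsFRS) (a : A) (k : ℕ) {i j : I} (hij : i ≠ j) :
    C.mm (C.walk a (alt k i j)) (nxt k i j) (nxt k j i) = C.mm a i j := by
  rcases nxt_cases k i j with ⟨h1, h2⟩ | ⟨h1, h2⟩ <;> rw [h1, h2]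
  · exact hC.mm_walk a k hij
  · rw [mm_symm _ hij.symm, hC.mm_walk a k hij]

/-- A map which is nonpositive on two simple roots is nonpositive on the positive roots in
their span. -/
theorem gmap_nonpos_of_mem_Phi {a : A} {i j : I} {l : List I} {β : I → ℤ}
    (hi : C.gmap a l (Pi.single i 1) ≤ 0) (hj : C.gmap a l (Pi.single j 1) ≤ 0)
    (h : β ∈ C.Phi a i j) : C.gmap a l β ≤ 0 := by
  obtain ⟨_, m, n, rfl⟩ := h
  rw [map_add, map_smul, map_smul]
  exact add_nonpos (smul_nonpos_of_nonneg_of_nonpos (by positivity) hi)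
    (smul_nonpos_of_nonneg_of_nonpos (by positivity) hj)

theorem IsFRS.gmap_alt_nonneg (hC : C.IsFRS) {a : A} {k : ℕ} {i j : I}
    (hk : k < C.mm a i j) (h : C.ninv a (alt k i j) = k) :
    0 ≤ C.gmap a (alt k i j) (Pi.single j 1) := by
  cases k with
  | zero => exact single_nonneg j
  | succ k =>
    have h1 := (hC.reduced_tail (a := a) (i := i) (l := alt k j i)
      (h.trans (length_alt (k + 1) i j).symm)).2
    rcases hC.sign (gmap_mem_roots (alt (k + 1) i j) (single_mem_roots a j)) with h2 | h2
    · exact h2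
    · exfalso
      have h3 : C.Phi a i j ⊆ C.Inv a (alt (k + 1) i j) := by
        intro β hβ
        refine ⟨hβ.1, ?_, gmap_nonpos_of_mem_Phi h1 h2 hβ⟩
        obtain ⟨_, m, n, rfl⟩ := hβ
        exact add_nonneg (smul_nonneg (by positivity) (single_nonneg i))
          (smul_nonneg (by positivity) (single_nonneg j))
      have h4 := Set.ncard_le_ncard h3 (hC.finite_Inv _ _)
      unfold ninv at h
      unfold mm at hk
      omega

theorem IsFRS.ninv_alt (hC : C.IsFRS) {k : ℕ} {a : A} {i j : I} (hij : i ≠ j)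
    (hk : k ≤ C.mm a i j) : C.ninv a (alt k i j) = k := by
  induction k generalizing a i j with
  | zero => exact ninv_nil a
  | succ k ih =>
    have h0 : C.mm (C.ρ i a) j i = C.mm a i j := by
      rw [mm_symm _ hij.symm, hC.mm_rho a hij]
    have h1 : C.ninv (C.ρ i a) (alt k j i) = k := ih hij.symm (by omega)
    have h2 := hC.gmap_alt_nonneg (a := C.ρ i a) (k := k) (i := j) (j := i) (by omega) h1
    change C.ninv a (i :: alt k j i) = _
    rw [hC.ninv_cons_of_nonpos, h1]
    rw [gmap_cons_single]
    exact neg_nonpos.2 h2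

/-- Before an alternating word reaches the maximal length, its next letter produces a positive
root in the rank two span. -/
theorem IsFRS.next_root_mem_Phi (hC : C.IsFRS) {k : ℕ} {a : A} {i j : I} (hij : i ≠ j)
    (hk : k < C.mm a i j) :
    C.gmap (C.walk a (alt k i j)) (alt k i j).reverse (Pi.single (nxt k i j) 1)
      ∈ C.Phi a i j := by
  have hmm := hC.mm_walk_nxt a k hij
  have hne := nxt_ne k hij
  rw [mm_symm _ hne] at hmm
  refine (mem_Phi hij).2 ⟨?_, ?_, fun t hi hj => ?_⟩
  · have := gmap_mem_roots (C := C) (alt k i j).reverse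
      (single_mem_roots (C.walk a (alt k i j)) (nxt k i j))
    rwa [walk_reverse] at this
  · rw [alt_reverse]
    exact hC.gmap_alt_nonneg (by omega) (hC.ninv_alt hne.symm (by omega))
  · have h1 : t ≠ nxt k i j ∧ t ≠ nxt k j i := by
      rcases nxt_cases k i j with ⟨h1, h2⟩ | ⟨h1, h2⟩ <;> rw [h1, h2]
      exacts [⟨hi, hj⟩, ⟨hj, hi⟩]
    rw [alt_reverse, gmap_alt_of_ne _ _ h1.2 h1.1]
    simp [h1.1]

/-- The alternating word of maximal length inverts the whole rank two span. -/
theorem IsFRS.gmap_top_nonpos (hC : C.IsFRS) (a : A) {i j : I} (hij : i ≠ j) {β : I → ℤ}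
    (hβ : β ∈ C.Phi a i j) : C.gmap a (alt (C.mm a i j) i j) β ≤ 0 := by
  have h1 : C.Inv a (alt (C.mm a i j) i j) ⊆ C.Phi a i j := by
    rintro β ⟨h1, h2, h3⟩
    refine (mem_Phi hij).2 ⟨h1, h2, fun t hi hj => le_antisymm ?_ (h2 t)⟩
    rw [← gmap_alt_of_ne (C := C) a (C.mm a i j) hi hj β]
    exact h3 t
  have h2 := Set.eq_of_subset_of_ncard_le h1 (hC.ninv_alt hij le_rfl).ge (hC.finite_Phi a i j)
  rw [← h2] at hβ
  exact hβ.2.2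

/-- The inverse of the longest alternating word makes both simple roots of its rank two span
nonpositive. -/
theorem IsFRS.gmap_top_reverse_nonpos (hC : C.IsFRS) (a : A) {i j : I} (hij : i ≠ j) {m : ℕ}
    (hm : m = C.mm a i j) {β : I → ℤ}
    (hβ : β ∈ C.Phi (C.walk a (alt m i j)) (nxt m j i) (nxt m i j)) :
    C.gmap (C.walk a (alt m i j)) (alt m i j).reverse β ≤ 0 := by
  have h := hC.mm_walk_nxt a m hij
  rw [mm_symm _ (nxt_ne m hij)] at h
  have h1 := hC.gmap_top_nonpos _ (nxt_ne m hij).symm hβ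
  rw [h, ← hm] at h1
  rwa [alt_reverse]

/-- The longest alternating word sends simple roots of its rank two span to negatives of simple
roots: it and its inverse have nonpositive integer matrices. -/
theorem IsFRS.gmap_top_single_or (hC : C.IsFRS) (a : A) {i j : I} (hij : i ≠ j) {m : ℕ}
    (hm : m = C.mm a i j) {t : I} (ht : t = i ∨ t = j) :
    C.gmap a (alt m i j) (Pi.single t 1) = -Pi.single (nxt m i j) 1 ∨
      C.gmap a (alt m i j) (Pi.single t 1) = -Pi.single (nxt m j i) 1 := by
  set b := C.walk a (alt m i j) with hb
  set p := nxt m i j with hp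
  set q := nxt m j i with hq
  have hpq : p ≠ q := nxt_ne m hij
  set γ := C.gmap a (alt m i j) (Pi.single t 1) with hγ
  have hroot : γ ∈ C.roots b := gmap_mem_roots _ (single_mem_roots a t)
  have htΦ : Pi.single t 1 ∈ C.Phi a i j := by
    rcases ht with rfl | rfl
    · exact single_mem_Phi a hij
    · rw [Phi_symm a hij]
      exact single_mem_Phi a hij.symm
  have hneg : γ ≤ 0 := by
    have := hC.gmap_top_nonpos a hij htΦ
    rwa [← hm] at this
  have hzero : ∀ k, k ≠ p → k ≠ q → γ k = 0 := by
    intro k h1 h2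
    have h3 : k ≠ i ∧ k ≠ j := by
      rcases nxt_cases m i j with ⟨e1, e2⟩ | ⟨e1, e2⟩
      · rw [hp, e1] at h1; rw [hq, e2] at h2; exact ⟨h1, h2⟩
      · rw [hp, e1] at h1; rw [hq, e2] at h2; exact ⟨h2, h1⟩
    rw [hγ, gmap_alt_of_ne _ _ h3.1 h3.2]
    rcases ht with rfl | rfl
    exacts [by simp [h3.1], by simp [h3.2]]
  have hdec : γ = γ p • Pi.single p 1 + γ q • Pi.single q 1 := by
    funext k
    by_cases h1 : k = p
    · rw [h1]; simp [hpq]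
    · by_cases h2 : k = q
      · rw [h2]; simp [hpq.symm]
      · simp [h1, h2, hzero k h1 h2]
  set f := C.gmap b (alt m i j).reverse with hf
  have hback : f γ = Pi.single t 1 := gmap_reverse a (alt m i j) _
  have hP : ∀ s, Pi.single s 1 ∈ C.Phi b q p → ∑ k, f (Pi.single s 1) k < 0 := by
    intro s hs
    have h1 := hC.gmap_top_reverse_nonpos a hij hm hs
    have h2 := root_ne_zero (gmap_mem_roots (alt m i j).reverse hs.1)
    exact Fintype.sum_neg (lt_of_le_of_ne h1 h2)
  have hPp := hP p (by rw [Phi_symm _ hpq.symm]; exact single_mem_Phi _ hpq)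
  have hPq := hP q (single_mem_Phi _ hpq.symm)
  have hsum : (1 : ℤ) = γ p * ∑ k, f (Pi.single p 1) k + γ q * ∑ k, f (Pi.single q 1) k := by
    have hfd : f γ = γ p • f (Pi.single p 1) + γ q • f (Pi.single q 1) := by
      conv_lhs => rw [hdec]
      rw [map_add, map_smul, map_smul]
    calc (1 : ℤ) = ∑ k, f γ k := by rw [hback]; simp
      _ = _ := by
        rw [hfd, Finset.mul_sum, Finset.mul_sum, ← Finset.sum_add_distrib]
        rfl
  have hneg' : ∀ s, γ = Pi.single s 1 ∨ γ = -Pi.single s 1 → γ = -Pi.single s 1 := by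
    rintro s (h | h)
    · exfalso
      have := hneg s
      rw [h] at this
      simp at this
    · exact h
  -- A simple root is not a sum of two nonzero nonnegative vectors.
  have hxy : γ p = 0 ∨ γ q = 0 := by
    by_contra! hcon
    have h1 : γ p < 0 := lt_of_le_of_ne (hneg p) hcon.1
    have h2 : γ q < 0 := lt_of_le_of_ne (hneg q) hcon.2
    nlinarith
  rcases hxy with h | h
  · right
    refine hneg' q (hC.eq_single hroot fun k hk => ?_)
    by_cases h1 : k = p
    · rw [h1, h]
    · exact hzero k h1 hk
  · left
    refine hneg' p (hC.eq_single hroot fun k hk => ?_)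
    by_cases h1 : k = q
    · rw [h1, h]
    · exact hzero k hk h1

/-- The longest alternating word sends `α_i` to the negative of the simple root whose index is
not its last letter. -/
theorem IsFRS.gmap_top_fst (hC : C.IsFRS) (a : A) {i j : I} (hij : i ≠ j) {m : ℕ}
    (hm : m = C.mm a i j) :
    C.gmap a (alt m i j) (Pi.single i 1) = -Pi.single (nxt m i j) 1 := by
  refine (hC.gmap_top_single_or a hij hm (Or.inl rfl)).resolve_right fun h => ?_
  have h2 := hC.two_le_mm a hij
  obtain ⟨k, rfl⟩ : ∃ k, m = k + 2 := ⟨m - 2, by omega⟩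
  -- The last letter is `q`, and the shorter word already makes `α_i` negative.
  set q := nxt (k + 2) j i with hq
  have hw : alt (k + 2) i j = alt (k + 1) i j ++ [q] := alt_succ' (k + 1) i j
  have hred : C.ninv a (alt (k + 1) i j) = k + 1 := hC.ninv_alt hij (by omega)
  have hneg := (hC.reduced_tail (a := a) (i := i) (l := alt k j i)
      (hred.trans (length_alt (k + 1) i j).symm)).2
  rw [hw, gmap_append] at h
  set x := C.gmap a (alt (k + 1) i j) (Pi.single i 1) with hx
  set c := C.walk a (alt (k + 1) i j)
  have h3 : C.sigL c q x = C.sigL c q (Pi.single q 1) := by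
    rw [sigL_single]; exact h
  have h4 : x = Pi.single q 1 := gmap_injective (C := C) c [q] h3
  have h5 : x q ≤ 0 := hneg q
  rw [h4] at h5
  simp at h5

theorem IsFRS.gmap_top_snd (hC : C.IsFRS) (a : A) {i j : I} (hij : i ≠ j) {m : ℕ}
    (hm : m = C.mm a i j) :
    C.gmap a (alt m i j) (Pi.single j 1) = -Pi.single (nxt m j i) 1 := by
  refine (hC.gmap_top_single_or a hij hm (Or.inr rfl)).resolve_left fun h => hij ?_
  have h1 := gmap_injective (C := C) a (alt m i j) (h.trans (hC.gmap_top_fst a hij hm).symm)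
  by_contra hne
  have h2 := congrFun h1 i
  simp [hne] at h2

theorem walk_alt_two_mul (a : A) (n : ℕ) (i j : I) :
    C.walk a (alt (n + n) j i) = (fun x => C.ρ i (C.ρ j x))^[n] a := by
  induction n generalizing a with
  | zero => rfl
  | succ n ih =>
    rw [Function.iterate_succ_apply, ← ih, show n + 1 + (n + 1) = (n + n) + 1 + 1 by omega]
    rfl

theorem IsFRS.walk_braid (hC : C.IsFRS) (a : A) {i j : I} (hij : i ≠ j) {m : ℕ}
    (hm : m = C.mm a i j) : C.walk a (alt m i j) = C.walk a (alt m j i) := by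
  have h1 : C.walk a (alt (m + m) j i) = a := by
    rw [walk_alt_two_mul, hm]
    exact hC.2.2.2 a i j hij
  rw [alt_add, walk_append, ← alt_reverse] at h1
  have h2 := walk_reverse (C := C) (C.walk a (alt m j i)) (alt m i j).reverse
  rwa [h1, List.reverse_reverse] at h2

theorem IsFRS.gmap_braid_span (hC : C.IsFRS) (a : A) {i j : I} (hij : i ≠ j) {m : ℕ}
    (hm : m = C.mm a i j) {s : I → ℤ} (hs : ∀ k, k ≠ i → k ≠ j → s k = 0) :
    C.gmap a (alt m i j) s = C.gmap a (alt m j i) s := by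
  have hdec : s = s i • Pi.single i 1 + s j • Pi.single j 1 := by
    funext k
    by_cases h1 : k = i
    · rw [h1]; simp [hij]
    · by_cases h2 : k = j
      · rw [h2]; simp [hij.symm]
      · simp [h1, h2, hs k h1 h2]
  have hm' : m = C.mm a j i := by rw [hm, mm_symm a hij]
  rw [hdec]
  simp only [map_add, map_smul]
  rw [hC.gmap_top_fst a hij hm, hC.gmap_top_snd a hij hm, hC.gmap_top_fst a hij.symm hm',
    hC.gmap_top_snd a hij.symm hm']

/-- The two longest alternating words differ on the remaining simple roots by a nonnegative
vector; by symmetry they agree. -/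
theorem IsFRS.gmap_braid_le (hC : C.IsFRS) (a : A) {i j : I} (hij : i ≠ j) {m : ℕ}
    (hm : m = C.mm a i j) {k : I} (hi : k ≠ i) (hj : k ≠ j) :
    C.gmap a (alt m i j) (Pi.single k 1) ≤ C.gmap a (alt m j i) (Pi.single k 1) := by
  set b := C.walk a (alt m i j) with hb
  set y := C.gmap b (alt m i j).reverse (Pi.single k 1) with hy
  have hyroot : y ∈ C.roots a := by
    have := gmap_mem_roots (C := C) (alt m i j).reverse (single_mem_roots b k)
    rwa [hb, walk_reverse] at this
  have hg : C.gmap a (alt m i j) y = Pi.single k 1 := gmap_reverse' a _ _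
  have hs : ∀ t, t ≠ i → t ≠ j → (y - Pi.single k 1 : I → ℤ) t = 0 := by
    intro t h1 h2
    have h3 := gmap_alt_of_ne (C := C) a m h1 h2 y
    rw [hg] at h3
    simp [← h3]
  have h1 := hC.gmap_braid_span a hij hm hs
  rw [map_sub, map_sub, hg] at h1
  have hroot := gmap_mem_roots (alt m j i) hyroot
  have hk : C.gmap a (alt m j i) y k = 1 := by
    rw [gmap_alt_of_ne _ _ hj hi]
    have := hs k hi hj
    simp only [Pi.sub_apply, Pi.single_eq_same] at this
    omega
  have hnn := hC.nonneg hroot (k := k) (by omega)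
  intro t
  have h2 := congrFun h1 t
  have h3 := hnn t
  by_cases htk : t = k
  · subst htk
    rw [gmap_alt_of_ne _ _ hi hj, gmap_alt_of_ne _ _ hj hi]
  · have h4 : (Pi.single k 1 : I → ℤ) t = 0 := by simp [htk]
    change 0 ≤ C.gmap a (alt m j i) y t at h3
    rw [Pi.sub_apply, Pi.sub_apply, h4] at h2
    linarith

/-- The braid relation: the two longest alternating words in `i` and `j` with target `a`
represent the same morphism. -/
theorem IsFRS.braid (hC : C.IsFRS) (a : A) {i j : I} (hij : i ≠ j) {m : ℕ}
    (hm : m = C.mm a i j) : C.Eqv a (alt m i j) (alt m j i) := by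
  refine ⟨hC.walk_braid a hij hm, LinearMap.pi_ext' fun k => LinearMap.ext_ring ?_⟩
  change C.gmap a (alt m i j) (Pi.single k 1) = C.gmap a (alt m j i) (Pi.single k 1)
  by_cases h : k = i ∨ k = j
  · refine hC.gmap_braid_span a hij hm fun t h1 h2 => ?_
    rcases h with rfl | rfl
    exacts [by simp [h1], by simp [h2]]
  · push Not at h
    exact le_antisymm (hC.gmap_braid_le a hij hm h.1 h.2)
      (hC.gmap_braid_le a hij.symm (hm.trans (mm_symm a hij)) h.2 h.1)

/-! ### Exchange, reduced words and length -/

/-- If `i` and `j` are descents of a reduced word beginning with `j`, then that word can be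
rewritten to begin with the alternating word `j i j ⋯` of any length up to the maximal one,
provided that shorter reduced words can be rewritten to begin with any of their descents. -/
theorem IsFRS.pull_alt (hC : C.IsFRS) {a : A} {i j : I} (hij : i ≠ j) {l l₁ : List I}
    (hred : C.ninv a l = l.length) (hi : C.gmap a l (Pi.single i 1) ≤ 0)
    (hl₁ : C.Eqv a (j :: l₁) l) (hlen : l₁.length + 1 = l.length)
    (ex : ∀ (b : A) (r : List I) (p : I), r.length < l.length → C.ninv b r = r.length →
      C.gmap b r (Pi.single p 1) ≤ 0 → ∃ r', C.Eqv b (p :: r') r ∧ r'.length + 1 = r.length)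
    (k : ℕ) (hk : k + 1 ≤ C.mm a j i) :
    ∃ r, C.Eqv a (alt (k + 1) j i ++ r) l ∧ r.length + (k + 1) = l.length := by
  have hred₁ : C.ninv a (j :: l₁) = (j :: l₁).length := by
    rw [hl₁.ninv_eq, hred, ← hlen]; rfl
  have hj : C.gmap a l (Pi.single j 1) ≤ 0 := by
    rw [← hl₁.2]
    exact (hC.reduced_tail hred₁).2
  induction k with
  | zero => exact ⟨l₁, hl₁, hlen⟩
  | succ k ih =>
    obtain ⟨r, hr, hrl⟩ := ih (by omega)
    set w := alt (k + 1) j i with hw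
    have hredw : C.ninv a (w ++ r) = (w ++ r).length := by
      rw [hr.ninv_eq, hred, List.length_append, length_alt]; omega
    have hr2 := hC.reduced_suffix w hredw
    have hΦ := hC.next_root_mem_Phi (a := a) (k := k + 1) hij.symm (by omega)
    have hneg := gmap_nonpos_of_mem_Phi hj hi hΦ
    rw [← hr.2, gmap_append, gmap_reverse'] at hneg
    obtain ⟨r', hr', hrl'⟩ := ex _ r _ (by omega) hr2 hneg
    refine ⟨r', ?_, by omega⟩
    rw [alt_succ', List.append_assoc]
    exact (Eqv.append_left w hr').trans hr

/-- Exchange: a reduced word can be rewritten to begin with any of its descents. -/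
theorem IsFRS.exchange (hC : C.IsFRS) (n : ℕ) : ∀ (a : A) (l : List I) (i : I), l.length = n →
    C.ninv a l = l.length → C.gmap a l (Pi.single i 1) ≤ 0 →
    ∃ l', C.Eqv a (i :: l') l ∧ l'.length + 1 = l.length := by
  induction n using Nat.strong_induction_on with
  | _ n ih =>
    intro a l i hn hred hi
    cases l with
    | nil => exact absurd (single_nonneg i) (not_nonneg_of_nonpos (single_mem_roots (C := C) a i) hi)
    | cons j l₁ =>
      by_cases hij : i = j
      · subst hij
        exact ⟨l₁, Eqv.refl _ _, rfl⟩
      · have h2 := hC.two_le_mm a (Ne.symm hij)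
        obtain ⟨k, hk⟩ : ∃ k, C.mm a j i = k + 1 := ⟨C.mm a j i - 1, by omega⟩
        obtain ⟨r, hr, hrl⟩ := hC.pull_alt hij hred hi (Eqv.refl _ _) rfl
          (fun b r p hlt => ih r.length (hn ▸ hlt) b r p rfl) k hk.ge
        refine ⟨alt k j i ++ r, ?_, ?_⟩
        · exact ((hC.braid a (Ne.symm hij) hk.symm).symm.append_right r).trans hr
        · rw [List.length_append, length_alt]; omega

/-- Every word is equivalent to one whose length is the number of inversions. -/
theorem IsFRS.exists_reduced (hC : C.IsFRS) (a : A) (l : List I) :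
    ∃ l', C.Eqv a l' l ∧ l'.length = C.ninv a l := by
  induction l generalizing a with
  | nil => exact ⟨[], Eqv.refl _ _, (ninv_nil a).symm⟩
  | cons i l ih =>
    obtain ⟨l₀, h1, h2⟩ := ih (C.ρ i a)
    rcases hC.sign (gmap_mem_roots (i :: l) (single_mem_roots a i)) with h | h
    · have h3 := hC.ninv_cons_of_nonneg h
      rw [gmap_cons_single, neg_nonneg, ← h1.2] at h
      obtain ⟨l', h4, h5⟩ := hC.exchange _ _ l₀ i rfl (by rw [h1.ninv_eq, h2]) h
      refine ⟨l', ?_, by omega⟩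
      exact (eqv_cancel a i l').symm.trans (Eqv.cons i (h4.trans h1))
    · refine ⟨i :: l₀, Eqv.cons i h1, ?_⟩
      rw [hC.ninv_cons_of_nonpos h, ← h2]; rfl

/-! ### The weak order on words -/

/-- The reduced word `x` is a prefix, up to equivalence, of a reduced word for `u`. -/
def LeW (C : CartanScheme I A) (a : A) (x u : List I) : Prop :=
  ∃ r, C.Eqv a (x ++ r) u ∧ x.length + r.length = C.ninv a u

theorem IsFRS.LeW_reduced (hC : C.IsFRS) {a : A} {x u : List I} (h : C.LeW a x u) :
    C.ninv a x = x.length := by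
  obtain ⟨r, h1, h2⟩ := h
  obtain ⟨x', h3, h4⟩ := hC.exists_reduced a x
  have h5 := hC.ninv_le_length a x
  have h6 := hC.ninv_le_length a (x' ++ r)
  rw [((h3.append_right r).trans h1).ninv_eq, List.length_append] at h6
  omega

theorem IsFRS.LeW_trans (hC : C.IsFRS) {a : A} {x y u : List I} (h : C.LeW a x y)
    (h' : C.LeW a y u) : C.LeW a x u := by
  have hy := hC.LeW_reduced h'
  obtain ⟨r, h1, h2⟩ := h
  obtain ⟨s, h3, h4⟩ := h'
  refine ⟨r ++ s, ?_, by rw [List.length_append]; omega⟩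
  rw [← List.append_assoc]
  exact (h1.append_right s).trans h3

theorem LeW.congr_left {a : A} {x x' u : List I} (h : C.LeW a x u) (hx : C.Eqv a x' x)
    (hl : x'.length = x.length) : C.LeW a x' u := by
  obtain ⟨r, h1, h2⟩ := h
  exact ⟨r, (hx.append_right r).trans h1, by omega⟩

theorem LeW.congr_right {a : A} {x u u' : List I} (h : C.LeW a x u) (hu : C.Eqv a u u') :
    C.LeW a x u' := by
  obtain ⟨r, h1, h2⟩ := h
  exact ⟨r, h1.trans hu, by rw [h2, hu.ninv_eq]⟩

theorem LeW_refl {a : A} {x : List I} (h : C.ninv a x = x.length) : C.LeW a x x :=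
  ⟨[], by rw [List.append_nil]; exact Eqv.refl _ _, by rw [h]; rfl⟩

theorem LeW_nil {a : A} {x : List I} (h : C.ninv a x = x.length) : C.LeW a [] x :=
  ⟨x, Eqv.refl _ _, by rw [h]; simp⟩

theorem IsFRS.LeW_cons_descent (hC : C.IsFRS) {a : A} {i : I} {x u : List I}
    (h : C.LeW a (i :: x) u) : C.gmap a u (Pi.single i 1) ≤ 0 := by
  obtain ⟨r, h1, h2⟩ := h
  rw [← h1.2]
  refine (hC.reduced_tail (l := x ++ r) ?_).2
  change C.ninv a (i :: x ++ r) = (i :: x ++ r).length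
  rw [h1.ninv_eq, List.length_append, h2]

/-- Words beginning with a descent `i` of `u` compare with `u` as their tails compare with
`σ_i u`. -/
theorem IsFRS.LeW_cons_iff (hC : C.IsFRS) {a : A} {i : I} {x u : List I}
    (hi : C.gmap a u (Pi.single i 1) ≤ 0) :
    C.LeW a (i :: x) u ↔ C.LeW (C.ρ i a) x (i :: u) := by
  have h0 := hC.ninv_descent hi
  constructor
  · rintro ⟨r, h1, h2⟩
    refine ⟨r, ?_, by simp only [List.length_cons] at h2; omega⟩
    have h3 : C.Eqv (C.ρ i a) (i :: (i :: x ++ r)) (i :: u) :=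
      Eqv.cons i (by rw [C.ρ_invol]; exact h1)
    exact (eqv_cancel (C.ρ i a) i (x ++ r)).symm.trans h3
  · rintro ⟨r, h1, h2⟩
    refine ⟨r, ?_, by simp only [List.length_cons]; omega⟩
    exact (Eqv.cons i h1).trans (eqv_cancel a i u)

/-- Two descents of `u` put the longest alternating word below `u`. -/
theorem IsFRS.LeW_alt (hC : C.IsFRS) {a : A} {i j : I} (hij : i ≠ j) {u : List I}
    (hi : C.gmap a u (Pi.single i 1) ≤ 0) (hj : C.gmap a u (Pi.single j 1) ≤ 0) :
    C.LeW a (alt (C.mm a i j) i j) u := by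
  obtain ⟨l, h1, h2⟩ := hC.exists_reduced a u
  have hred : C.ninv a l = l.length := by rw [h1.ninv_eq, h2]
  rw [← h1.2] at hi hj
  obtain ⟨l₁, h3, h4⟩ := hC.exchange _ a l i rfl hred hi
  have hmm := hC.two_le_mm a hij
  obtain ⟨k, hk⟩ : ∃ k, C.mm a i j = k + 1 := ⟨C.mm a i j - 1, by omega⟩
  obtain ⟨r, hr, hrl⟩ := hC.pull_alt (Ne.symm hij) hred hj h3 h4
    (fun b r p _ => hC.exchange _ b r p rfl) k hk.ge
  rw [hk]
  exact ⟨r, hr.trans h1, by rw [length_alt]; omega⟩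

/-- Two elements below both `u` and `v` have a common upper bound below `u` and `v`. If they
begin with the same letter, that letter is removed; otherwise the longest alternating word in
the two first letters, which is below `u` and `v`, links them. -/
theorem IsFRS.exists_upper (hC : C.IsFRS) (n : ℕ) : ∀ (a : A) (u v x w : List I),
    C.ninv a u ≤ n → C.LeW a x u → C.LeW a x v → C.LeW a w u → C.LeW a w v →
    ∃ z, C.LeW a x z ∧ C.LeW a w z ∧ C.LeW a z u ∧ C.LeW a z v := by
  induction n with
  | zero =>
    intro a u v x w hn hxu hxv hwu hwv
    have hx : x = [] := by
      obtain ⟨r, _, h⟩ := hxu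
      exact List.length_eq_zero_iff.1 (by omega)
    subst hx
    exact ⟨w, LeW_nil (hC.LeW_reduced hwu), LeW_refl (hC.LeW_reduced hwu), hwu, hwv⟩
  | succ n ih =>
    intro a u v x w hn hxu hxv hwu hwv
    have same : ∀ (i : I) (x w : List I), C.LeW a (i :: x) u → C.LeW a (i :: x) v →
        C.LeW a (i :: w) u → C.LeW a (i :: w) v →
        ∃ z, C.LeW a (i :: x) z ∧ C.LeW a (i :: w) z ∧ C.LeW a z u ∧ C.LeW a z v := by
      intro i x w hxu hxv hwu hwv
      have hu := hC.LeW_cons_descent hxu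
      have hv := hC.LeW_cons_descent hxv
      have h0 := hC.ninv_descent hu
      obtain ⟨z, h1, h2, h3, h4⟩ := ih (C.ρ i a) (i :: u) (i :: v) x w (by omega)
        ((hC.LeW_cons_iff hu).1 hxu) ((hC.LeW_cons_iff hv).1 hxv)
        ((hC.LeW_cons_iff hu).1 hwu) ((hC.LeW_cons_iff hv).1 hwv)
      have hzu := (hC.LeW_cons_iff hu).2 h3
      have hzv := (hC.LeW_cons_iff hv).2 h4
      have hz := hC.LeW_cons_descent (LeW_refl (hC.LeW_reduced hzu))
      have hc := (eqv_cancel (C := C) (C.ρ i a) i z).symm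
      exact ⟨i :: z, (hC.LeW_cons_iff hz).2 (h1.congr_right hc),
        (hC.LeW_cons_iff hz).2 (h2.congr_right hc), hzu, hzv⟩
    cases x with
    | nil => exact ⟨w, LeW_nil (hC.LeW_reduced hwu), LeW_refl (hC.LeW_reduced hwu), hwu, hwv⟩
    | cons i x =>
      cases w with
      | nil =>
        exact ⟨i :: x, LeW_refl (hC.LeW_reduced hxu), LeW_nil (hC.LeW_reduced hxu), hxu, hxv⟩
      | cons j w =>
        by_cases hij : i = j
        · subst hij
          exact same i x w hxu hxv hwu hwv
        · have hmu := hC.LeW_alt hij (hC.LeW_cons_descent hxu) (hC.LeW_cons_descent hwu)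
          have hmv := hC.LeW_alt hij (hC.LeW_cons_descent hxv) (hC.LeW_cons_descent hwv)
          have hbr := hC.braid a hij rfl
          have hmm := hC.two_le_mm a hij
          obtain ⟨k, hk⟩ : ∃ k, C.mm a i j = k + 1 := ⟨C.mm a i j - 1, by omega⟩
          rw [hk] at hmu hmv hbr
          obtain ⟨y, hxy, hmy, hyu, hyv⟩ := same i x (alt k j i) hxu hxv hmu hmv
          have hyred := hC.LeW_reduced hyu
          obtain ⟨r, hr, hrl⟩ := hmy
          -- The reduced word for `y` through the longest element, rewritten to begin with `j`.
          have hy' : C.Eqv a (j :: (alt k i j ++ r)) y :=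
            (hbr.symm.append_right r).trans hr
          have hl : (j :: (alt k i j ++ r)).length = y.length := by
            have := length_alt k j i
            simp only [List.length_cons, List.length_append, length_alt] at hrl ⊢
            omega
          obtain ⟨z, h1, h2, h3, h4⟩ := same j (alt k i j ++ r) w (hyu.congr_left hy' hl)
            (hyv.congr_left hy' hl) hwu hwv
          exact ⟨z, hC.LeW_trans hxy (h1.congr_left hy'.symm hl.symm), h2, h3, h4⟩

/-! ### Translation to morphisms -/

theorem Realizes.walk {w : Mor C} {l : List I} (h : Realizes w l) : C.walk w.tgt l = w.src := by
  rw [← h.1, walk_wordTarget]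

theorem realizes_iff {w : Mor C} {l l' : List I} (h : Realizes w l) :
    Realizes w l' ↔ C.Eqv w.tgt l' l := by
  have key : ∀ {l : List I}, C.walk w.tgt l = w.src →
      C.wordMap w.src l = C.gmap (C.walk w.tgt l) l.reverse := fun {l} hl => by
    rw [hl, wordMap_eq_gmap]
  constructor
  · intro h'
    refine ⟨h'.walk.trans h.walk.symm, LinearMap.ext fun x => ?_⟩
    have h1 : C.wordMap w.src l (C.gmap w.tgt l x) = x := by
      rw [key h.walk, gmap_reverse]
    have h2 : C.wordMap w.src l' (C.gmap w.tgt l' x) = x := by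
      rw [key h'.walk, gmap_reverse]
    have hinj : Function.Injective (C.wordMap w.src l) := by
      rw [wordMap_eq_gmap]
      exact gmap_injective _ _
    apply hinj
    rw [h1, h.2, ← h'.2, h2]
  · intro h'
    have hw : C.walk w.tgt l' = w.src := h'.1.trans h.walk
    refine ⟨by rw [← hw, wordTarget_walk], ?_⟩
    rw [← h.2]
    funext x
    have h1 : C.gmap w.tgt l (C.wordMap w.src l x) = x := by
      rw [key h.walk, gmap_reverse']
    have h2 : C.gmap w.tgt l' (C.wordMap w.src l' x) = x := by
      rw [key hw, gmap_reverse']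
    apply gmap_injective (C := C) w.tgt l'
    rw [h2, h'.2, h1]

theorem IsFRS.len_eq (hC : C.IsFRS) {w : Mor C} {l : List I} (h : Realizes w l) :
    len w = C.ninv w.tgt l := by
  obtain ⟨l', h1, h2⟩ := hC.exists_reduced w.tgt l
  refine le_antisymm ?_ ?_
  · exact Nat.sInf_le ⟨l', (realizes_iff h).2 h1, h2⟩
  · refine le_csInf ⟨_, l, h, rfl⟩ ?_
    rintro k ⟨l'', h3, rfl⟩
    rw [← ((realizes_iff h).1 h3).ninv_eq]
    exact hC.ninv_le_length _ _

theorem IsFRS.exists_reduced_word (hC : C.IsFRS) (w : Mor C) :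
    ∃ l, Realizes w l ∧ l.length = len w := by
  obtain ⟨l, h⟩ := w.spec
  obtain ⟨l', h1, h2⟩ := hC.exists_reduced w.tgt l
  exact ⟨l', (realizes_iff h).2 h1, by rw [h2, hC.len_eq h]⟩

theorem realizes_comp {u v w : Mor C} {l r : List I} (h : v.tgt = u.src) (hw : w = u.comp v)
    (hu : Realizes u l) (hv : Realizes v r) : Realizes w (l ++ r) := by
  have : w = ⟨v.src, u.tgt, u.toFun ∘ v.toFun, w.spec.elim fun s hs =>
      ⟨s, by subst hw; simpa [Mor.comp, h] using hs⟩⟩ := by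
    subst hw
    simp [Mor.comp, h]
  rw [this]
  constructor
  · change C.wordTarget v.src (l ++ r) = u.tgt
    rw [C.wordTarget_append, hv.1, h, hu.1]
  · change C.wordMap v.src (l ++ r) = u.toFun ∘ v.toFun
    rw [C.wordMap_append, hv.1, h, hu.2, hv.2]

/-- The morphism with target `a` represented by a word. -/
def ofWord (C : CartanScheme I A) (a : A) (l : List I) : Mor C :=
  ⟨C.walk a l, a, C.wordMap (C.walk a l) l, l, wordTarget_walk a l, rfl⟩

theorem realizes_ofWord (a : A) (l : List I) : Realizes (C.ofWord a l) l :=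
  ⟨wordTarget_walk a l, rfl⟩

theorem Realizes.eq {w w' : Mor C} {l : List I} (h : Realizes w l) (h' : Realizes w' l)
    (ht : w.tgt = w'.tgt) : w = w' := by
  have hs : w.src = w'.src := by rw [← h.walk, ← h'.walk, ht]
  refine Mor.ext hs ht ?_
  rw [← h.2, ← h'.2, hs]

theorem IsFRS.LeW_of_weakLe (hC : C.IsFRS) {x u : Mor C} {lx lu : List I} (h : weakLe x u)
    (hx : Realizes x lx) (hxl : lx.length = len x) (hu : Realizes u lu) :
    C.LeW u.tgt lx lu := by
  obtain ⟨v, h1, h2, h3⟩ := h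
  obtain ⟨r, hr, hrl⟩ := hC.exists_reduced_word v
  refine ⟨r, (realizes_iff hu).1 (realizes_comp h1 h2 hx hr), ?_⟩
  rw [← hC.len_eq hu]; omega

theorem IsFRS.weakLe_of_LeW (hC : C.IsFRS) {x u : Mor C} {lx lu : List I} (ht : x.tgt = u.tgt)
    (hx : Realizes x lx) (hu : Realizes u lu) (h : C.LeW u.tgt lx lu) : weakLe x u := by
  have hxred := hC.LeW_reduced h
  rw [← ht, ← hC.len_eq hx] at hxred
  obtain ⟨r, h1, h2⟩ := h
  have hur : Realizes u (lx ++ r) := (realizes_iff hu).2 h1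
  have hr : C.ninv x.src r = r.length := by
    rw [← hx.walk, ht]
    refine hC.reduced_suffix lx ?_
    rw [h1.ninv_eq, List.length_append, h2]
  refine ⟨C.ofWord x.src r, rfl, ?_, ?_⟩
  · have h3 := realizes_comp rfl rfl hx (realizes_ofWord x.src r)
    refine hur.eq h3 ?_
    rw [← ht]
    simp [Mor.comp, ofWord]
  · rw [hC.len_eq hu, hC.len_eq (realizes_ofWord x.src r)]
    change _ = _ + C.ninv x.src r
    omega

end CartanScheme

/-- If `w ≤_R u`, `w ≤_R v` and `I_L(w) ⊊ I_L(u) ∩ I_L(v)`, then there is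
`w'` with `w <_R w'`, `w' ≤_R u` and `w' ≤_R v`. -/
theorem exists_bigger_lower_bound (C : CartanScheme I A) (hC : C.IsFRS) (a : A)
    (u v w : Mor C) (hu : u.tgt = a) (hv : v.tgt = a) (hw : w.tgt = a)
    (hwu : weakLe w u) (hwv : weakLe w v) (hIL : IL w ⊂ IL u ∩ IL v) :
    ∃ w' : Mor C, weakLe w w' ∧ w ≠ w' ∧ weakLe w' u ∧ weakLe w' v := by
  subst hw
  obtain ⟨i, hi, hiw⟩ := Set.exists_of_ssubset hIL
  obtain ⟨hiu, hiv⟩ := hi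
  change weakLe (sgen C u.tgt i) u at hiu
  change weakLe (sgen C v.tgt i) v at hiv
  rw [hu] at hiu
  rw [hv] at hiv
  obtain ⟨lu, hlu, -⟩ := hC.exists_reduced_word u
  obtain ⟨lv, hlv, -⟩ := hC.exists_reduced_word v
  obtain ⟨lw, hlw, hwl⟩ := hC.exists_reduced_word w
  obtain ⟨lx, hlx, hxl⟩ := hC.exists_reduced_word (sgen C w.tgt i)
  have h1 := hC.LeW_of_weakLe hiu hlx hxl hlu
  have h2 := hC.LeW_of_weakLe hiv hlx hxl hlv
  have h3 := hC.LeW_of_weakLe hwu hlw hwl hlu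
  have h4 := hC.LeW_of_weakLe hwv hlw hwl hlv
  rw [hu] at h1 h3
  rw [hv] at h2 h4
  obtain ⟨z, hxz, hwz, hzu, hzv⟩ := hC.exists_upper _ w.tgt lu lv lx lw le_rfl h1 h2 h3 h4
  have hz := realizes_ofWord (C := C) w.tgt z
  refine ⟨C.ofWord w.tgt z, hC.weakLe_of_LeW rfl hlw hz hwz, fun h => hiw ?_,
    hC.weakLe_of_LeW hu.symm hz hlu (by rw [hu]; exact hzu),
    hC.weakLe_of_LeW hv.symm hz hlv (by rw [hv]; exact hzv)⟩
  have h5 : weakLe (sgen C w.tgt i) (C.ofWord w.tgt z) := hC.weakLe_of_LeW rfl hlx hz hxz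
  rw [← h] at h5
  exact h5
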